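/- For every quasi-poset P on [n] there exists a unique polynomial ehr^str_P ∈ ℚ[X] such that for every integer k ≥ 0, ehr^str_P(k) equals the number of functions f : Fin n → Fin k such that i ≤_P j implies f(i) ≤ f(j), and such that i ≤_P j together with f(i) = f(j) implies i ~_P j. Moreover, if n ≥ 1, then ehr^str_P(X) = Σ_{i=1}^{n} #W^str_P(i) · H_i(X), where H_i(X) = X(X-1)⋯(X-i+1)/i! is the i-th Hilbert (binomial coefficient) polynomial. -/

import Mathlib

open Polynomial

/-- Number of strictly monotone maps `Fin n → Fin k` (the set `L^str_P(k)`). -/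
noncomputable def LstrCount {n : ℕ} (le : Fin n → Fin n → Prop) (k : ℕ) : ℕ :=
  Nat.card {f : Fin n → Fin k //
    (∀ i j, le i j → f i ≤ f j) ∧ (∀ i j, le i j → f i = f j → le j i)}

/-- Number of surjective elements of `L^str_P(k)` (the set `W^str_P(k)`). -/
noncomputable def WstrCount {n : ℕ} (le : Fin n → Fin n → Prop) (k : ℕ) : ℕ :=
  Nat.card {f : Fin n → Fin k //
    Function.Surjective f ∧ (∀ i j, le i j → f i ≤ f j) ∧
    (∀ i j, le i j → f i = f j → le j i)}

/-- The `i`-th Hilbert polynomial `H_i(X) = X(X-1)⋯(X-i+1)/i!`. -/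
noncomputable def Hilb (i : ℕ) : ℚ[X] :=
  Polynomial.C ((i.factorial : ℚ)⁻¹) * descPochhammer ℚ i

def Lpred {n : ℕ} (le : Fin n → Fin n → Prop) {k : ℕ} (f : Fin n → Fin k) : Prop :=
  (∀ i j, le i j → f i ≤ f j) ∧ (∀ i j, le i j → f i = f j → le j i)

theorem fiber_card {n : ℕ} (le : Fin n → Fin n → Prop) (k : ℕ) (S : Finset (Fin k)) :
    Nat.card {f : Fin n → Fin k // Lpred le f ∧ Finset.univ.image f = S}
      = WstrCount le S.card := by
  unfold WstrCount
  symm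
  let e := S.orderEmbOfFin rfl
  have he : ∀ x, e x ∈ S := fun x => S.orderEmbOfFin_mem rfl x
  have hr : ∀ y ∈ S, ∃ x, e x = y := by
    intro y hy
    have := Finset.range_orderEmbOfFin S rfl
    have h2 : y ∈ Set.range e := by rw [this]; exact hy
    exact h2
  refine Nat.card_congr (Equiv.ofBijective
    (fun g => ⟨fun i => e (g.1 i), ⟨?_, ?_⟩, ?_⟩) ⟨?_, ?_⟩)
  · intro i j h
    exact e.monotone (g.2.2.1 i j h)
  · intro i j h h2
    exact g.2.2.2 i j h (e.injective h2)
  · ext y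
    simp only [Finset.mem_image, Finset.mem_univ, true_and]
    constructor
    · rintro ⟨i, rfl⟩
      exact he _
    · intro hy
      obtain ⟨x, rfl⟩ := hr y hy
      obtain ⟨i, rfl⟩ := g.2.1 x
      exact ⟨i, rfl⟩
  · rintro ⟨g, hg⟩ ⟨g', hg'⟩ h
    rw [Subtype.mk.injEq] at h ⊢
    funext i
    exact e.injective (congrFun h i)
  · rintro ⟨f, ⟨h1, h2⟩, h3⟩
    have hf : ∀ i, ∃ x, e x = f i := fun i => hr _ (by
      rw [← h3]; exact Finset.mem_image_of_mem _ (Finset.mem_univ _))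
    choose g hg using hf
    refine ⟨⟨g, ?_, ?_, ?_⟩, ?_⟩
    · intro x
      have := (Finset.ext_iff.1 h3 (e x)).2 (he x)
      obtain ⟨i, -, hi⟩ := Finset.mem_image.1 this
      exact ⟨i, e.injective (by rw [hg, hi])⟩
    · intro i j h
      have := h1 i j h
      rw [← hg, ← hg] at this
      exact e.le_iff_le.1 this
    · intro i j h hh
      exact h2 i j h (by rw [← hg, ← hg, hh])
    · rw [Subtype.mk.injEq]
      funext i
      exact hg i

theorem W_zero_of_gt {n : ℕ} (le : Fin n → Fin n → Prop) (i : ℕ) (h : n < i) :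
    WstrCount le i = 0 := by
  unfold WstrCount
  have : IsEmpty {f : Fin n → Fin i //
    Function.Surjective f ∧ (∀ i j, le i j → f i ≤ f j) ∧
    (∀ i j, le i j → f i = f j → le j i)} := ⟨fun f => by
      have := Fintype.card_le_of_surjective _ f.2.1
      simp at this
      omega⟩
  exact Nat.card_of_isEmpty

theorem W_zero {n : ℕ} (le : Fin n → Fin n → Prop) (h : 1 ≤ n) :
    WstrCount le 0 = 0 := by
  unfold WstrCount
  have : IsEmpty {f : Fin n → Fin 0 //
    Function.Surjective f ∧ (∀ i j, le i j → f i ≤ f j) ∧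
    (∀ i j, le i j → f i = f j → le j i)} := ⟨fun f => (f.1 ⟨0, h⟩).elim0⟩
  exact Nat.card_of_isEmpty

theorem L_eq {n : ℕ} (le : Fin n → Fin n → Prop) (k : ℕ) :
    LstrCount le k = ∑ i ∈ Finset.range (n + 1), k.choose i * WstrCount le i := by
  classical
  have h1 : LstrCount le k
      = ∑ S ∈ (Finset.univ : Finset (Fin k)).powerset, WstrCount le S.card := by
    have : LstrCount le k = (Finset.univ.filter (fun f : Fin n → Fin k => Lpred le f)).card := by
      rw [← Fintype.card_subtype, ← Nat.card_eq_fintype_card]; rfl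
    rw [this, Finset.card_eq_sum_card_fiberwise (f := fun f => Finset.univ.image f)
      (t := (Finset.univ : Finset (Fin k)).powerset) (by intro f _; simp)]
    refine Finset.sum_congr rfl fun S _ => ?_
    rw [← fiber_card, Finset.filter_filter, ← Fintype.card_subtype, ← Nat.card_eq_fintype_card]
  rw [h1, Finset.sum_powerset_apply_card (fun m => WstrCount le m)]
  simp only [Finset.card_univ, Fintype.card_fin, smul_eq_mul]
  have hz : ∀ i, (k < i ∨ n < i) → k.choose i * WstrCount le i = 0 := by
    rintro i (h | h)
    · rw [Nat.choose_eq_zero_of_lt h, zero_mul]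
    · rw [W_zero_of_gt le i h, mul_zero]
  trans ∑ i ∈ Finset.range (max k n + 1), k.choose i * WstrCount le i
  · refine Finset.sum_subset (by intro x; simp; omega) fun i _ hi => hz i (Or.inl ?_)
    simp at hi; omega
  · symm
    refine Finset.sum_subset (by intro x; simp; omega) fun i _ hi => hz i (Or.inr ?_)
    simp at hi; omega

theorem Hilb_eval (i k : ℕ) : (Hilb i).eval (k : ℚ) = (k.choose i : ℚ) := by
  unfold Hilb
  rw [eval_mul, eval_C, descPochhammer_eval_eq_descFactorial, Nat.descFactorial_eq_factorial_mul_choose]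
  have : (i.factorial : ℚ) ≠ 0 := by exact_mod_cast i.factorial_ne_zero
  push_cast
  field_simp

theorem poly_ext_nat (p q : ℚ[X]) (h : ∀ k : ℕ, p.eval (k : ℚ) = q.eval (k : ℚ)) : p = q := by
  refine Polynomial.eq_of_infinite_eval_eq p q
    ((Set.infinite_range_of_injective (Nat.cast_injective (R := ℚ))).mono ?_)
  rintro _ ⟨k, rfl⟩
  exact h k

/-- Existence and uniqueness of the strict Ehrhart polynomial `ehr^str_P`, and its
expansion in the Hilbert basis. -/
theorem ehr_str_exists_unique {n : ℕ} (le : Fin n → Fin n → Prop)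
    (hrefl : ∀ i, le i i)
    (htrans : ∀ i j k, le i j → le j k → le i k) :
    (∃! p : ℚ[X], ∀ k : ℕ, p.eval (k : ℚ) = LstrCount le k) ∧
    (1 ≤ n → ∀ p : ℚ[X], (∀ k : ℕ, p.eval (k : ℚ) = LstrCount le k) →
      p = ∑ i ∈ Finset.Icc 1 n, (WstrCount le i : ℚ) • Hilb i) := by
  have key : ∀ k : ℕ, (∑ i ∈ Finset.range (n + 1), (WstrCount le i : ℚ) • Hilb i).eval (k : ℚ)
      = LstrCount le k := by
    intro k
    rw [L_eq, eval_finsetSum]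
    push_cast
    refine Finset.sum_congr rfl fun i _ => ?_
    rw [eval_smul, Hilb_eval, smul_eq_mul, mul_comm]
  refine ⟨⟨_, key, fun q hq => poly_ext_nat _ _ fun k => by rw [key, hq]⟩, fun hn p hp => ?_⟩
  have : p = ∑ i ∈ Finset.range (n + 1), (WstrCount le i : ℚ) • Hilb i :=
    poly_ext_nat _ _ fun k => by rw [key, hp]
  rw [this]
  symm
  refine Finset.sum_subset (by intro x hx; rw [Finset.mem_Icc] at hx; rw [Finset.mem_range]; omega) fun i hi hi' => ?_
  have : i = 0 := by simp at hi hi'; omega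
  subst this
  rw [W_zero le hn]
  simp
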